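/- arXiv:2601.10941 — 2 statements merged into one kernel-verified Lean document; each statement's English description precedes it below -/
import Mathlib

section
/- Under assumptions (I1)–(I4), let λ ∈ (λ_n, λ_{n+1}) and let u ∈ NP_λ be a minimizer of J_λ on NP_λ, i.e. J_λ(u) = inf_{NP_λ} J_λ. Then u is a critical point of J_λ, i.e. J_λ′(u)[v] = 0 for all v ∈ E. -/
open Filter Topology Set
open scoped InnerProductSpace

/- Abstract setting: `E = D(A^{1/2})` is a real Hilbert space in which the rescaled
eigenfunctions `ζ_k / √(1+λ_k)` form a Hilbert basis (encoded by `hON` and `hdense` below);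
the `H`-inner product of `u, v ∈ E` is recovered as `∑ₖ ⟨u,ζ_k⟩_H ⟨v,ζ_k⟩_H`, where
`⟨u,ζ_k⟩_H = ⟨u,ζ_k⟩_E / (1+λ_k)`. -/

variable {E : Type*} [NormedAddCommGroup E] [InnerProductSpace ℝ E] [CompleteSpace E]

/-- The `H`-inner-product coefficient `⟨u, ζ_k⟩_H = ⟨u, ζ_k⟩_E / (1 + λ_k)`. -/
noncomputable def coefH (lam : ℕ → ℝ) (ζ : ℕ → E) (u : E) (k : ℕ) : ℝ :=
  ⟪u, ζ k⟫_ℝ / (1 + lam k)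

/-- The square of the `H`-norm: `‖u‖_H² = ∑ₖ ⟨u,ζ_k⟩_H²`. -/
noncomputable def normHsq (lam : ℕ → ℝ) (ζ : ℕ → E) (u : E) : ℝ :=
  ∑' k, (coefH lam ζ u k) ^ 2

/-- The symmetric bilinear form `q_λ(u,v) = ∑ₖ (λ_k − λ) ⟨u,ζ_k⟩_H ⟨v,ζ_k⟩_H`. -/
noncomputable def qForm (lam : ℕ → ℝ) (ζ : ℕ → E) (lambda : ℝ) (u v : E) : ℝ :=
  ∑' k, (lam k - lambda) * (coefH lam ζ u k * coefH lam ζ v k)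

/-- The action functional `J_λ(u) = ½ q_λ(u) − I(u)`. -/
noncomputable def Jfun (lam : ℕ → ℝ) (ζ : ℕ → E) (I : E → ℝ) (lambda : ℝ) (u : E) : ℝ :=
  qForm lam ζ lambda u u / 2 - I u

/-- `E_n`, the span of the eigenfunctions `ζ_0, …, ζ_n` (the first `n+1` of them). -/
noncomputable def Esub (ζ : ℕ → E) (n : ℕ) : Submodule ℝ E :=
  Submodule.span ℝ (ζ '' {k : ℕ | k ≤ n})

/-- `F_n(u) = E_n ⊕ ℝ u`. -/
noncomputable def Fsub (ζ : ℕ → E) (n : ℕ) (u : E) : Submodule ℝ E :=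
  Esub ζ n ⊔ Submodule.span ℝ {u}

/-- `F_n(u)⁺ = E_n ⊕ ℝ⁺ u = {v + t u : v ∈ E_n, t > 0}`. -/
def FsubPlus (ζ : ℕ → E) (n : ℕ) (u : E) : Set E :=
  {w | ∃ v ∈ Esub ζ n, ∃ t : ℝ, 0 < t ∧ w = v + t • u}

/-- The derivative of `J_λ` at `u` applied to `w`: `J_λ'(u)[w] = q_λ(u,w) − I'(u)[w]`. -/
noncomputable def Jderiv (lam : ℕ → ℝ) (ζ : ℕ → E) (I' : E → E →L[ℝ] ℝ)
    (lambda : ℝ) (u w : E) : ℝ :=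
  qForm lam ζ lambda u w - I' u w

/-- The Nehari–Pankov set `NP_λ = {u ∈ E ∖ E_n : J_λ'(u)|_{F_n(u)} = 0}`. -/
def NehariPankov (lam : ℕ → ℝ) (ζ : ℕ → E) (I' : E → E →L[ℝ] ℝ)
    (n : ℕ) (lambda : ℝ) : Set E :=
  {u | u ∉ Esub ζ n ∧ ∀ w ∈ Fsub ζ n u, Jderiv lam ζ I' lambda u w = 0}

/-- The ground-state level `c_λ = inf_{NP_λ} J_λ`. -/
noncomputable def clevel (lam : ℕ → ℝ) (ζ : ℕ → E) (I : E → ℝ) (I' : E → E →L[ℝ] ℝ)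
    (n : ℕ) (lambda : ℝ) : ℝ :=
  sInf (Jfun lam ζ I lambda '' NehariPankov lam ζ I' n lambda)

/-- The set `Q_λ` of minimizers of `J_λ` on `NP_λ`. -/
def Qset (lam : ℕ → ℝ) (ζ : ℕ → E) (I : E → ℝ) (I' : E → E →L[ℝ] ℝ)
    (n : ℕ) (lambda : ℝ) : Set E :=
  {u | u ∈ NehariPankov lam ζ I' n lambda ∧
    Jfun lam ζ I lambda u = clevel lam ζ I I' n lambda}

/-- `E_n^⊥ = {w ∈ E : ⟨w, ζ_k⟩_H = 0 for k = 0, …, n}`. -/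
def EsubPerp (lam : ℕ → ℝ) (ζ : ℕ → E) (n : ℕ) : Set E :=
  {w | ∀ k ≤ n, coefH lam ζ w k = 0}

/-! The fibre of `u ∉ E_n` is `F_n(u)⁺ = E_n ⊕ ℝ⁺ u`. If `u ∈ NP_λ`, then (I4) and the negativity of
`q_λ` on `E_n` make `u` the strict maximum of `J_λ` on its fibre. Suppose `J_λ'(u)[v] < 0` for some
`v` and tilt the fibre to that of `u + s v`, `s > 0` small. Strict maxima are stable, so `J_λ` still
has a local maximum `w` on the tilted fibre, close to `u`; being critical along its fibre, `w` lies
in `NP_λ`. Strict differentiability at `u` shows that tilting decreased the value of `J_λ` by a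
first-order amount, whence `J_λ(w) < J_λ(u)`, against minimality. -/

section LocalMax

theorem eventually_exists_isLocalMax {X T α : Type*} [TopologicalSpace X] [LocallyCompactSpace X]
    [TopologicalSpace T] [LinearOrder α] [TopologicalSpace α] [OrderClosedTopology α]
    {f : T → X → α} (hf : Continuous (Function.uncurry f)) {t₀ : T} {x₀ : X}
    (hmax : ∀ᶠ x in 𝓝[≠] x₀, f t₀ x < f t₀ x₀) {U : Set X} (hU : U ∈ 𝓝 x₀) :
    ∀ᶠ t in 𝓝 t₀, ∃ x ∈ U, IsLocalMax (f t) x := by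
  rw [eventually_nhdsWithin_iff] at hmax
  obtain ⟨K, hKx₀, hKU, hK⟩ := local_compact_nhds (inter_mem hU hmax)
  have hx₀ : x₀ ∈ interior K := mem_interior_iff_mem_nhds.2 hKx₀
  have hboundary : ∀ᶠ t in 𝓝 t₀, ∀ x ∈ K \ interior K, f t x < f t x₀ := by
    refine (hK.diff isOpen_interior).eventually_forall_of_forall_eventually fun x hx => ?_
    have hlt : f t₀ x < f t₀ x₀ := (hKU hx.1).2 (ne_of_mem_of_not_mem hx₀ hx.2).symm
    exact ContinuousAt.eventually_lt (f := fun p : T × X => f p.1 p.2)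
      (g := fun p : T × X => f p.1 x₀) (by fun_prop) (by fun_prop) hlt
  filter_upwards [hboundary] with t ht
  obtain ⟨x, hxK, hx⟩ := hK.exists_isLocalMax_mem_open interior_subset (by fun_prop)
    (interior_subset hx₀) ht isOpen_interior
  exact ⟨x, (hKU (interior_subset hxK)).1, hx⟩

end LocalMax

section NehariPankovSet

variable {F : Type*} [NormedAddCommGroup F] [NormedSpace ℝ F]

theorem eventually_add_smul_lt_of_hasStrictFDerivAt {J : F → ℝ} {J' : F →L[ℝ] ℝ} {u v : F}
    (hJ : HasStrictFDerivAt J J' u) (hv : J' v < 0) :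
    ∀ᶠ p : F × ℝ in 𝓝 u ×ˢ 𝓝[>] 0, J (p.1 + p.2 • v) < J p.1 := by
  have hv0 : 0 < ‖v‖ := norm_pos_iff.2 fun h => by simp [h] at hv
  have htendsto : Tendsto (fun p : F × ℝ => (p.1 + p.2 • v, p.1)) (𝓝 u ×ˢ 𝓝[>] 0) (𝓝 (u, u)) := by
    have hcont : Continuous fun p : F × ℝ => (p.1 + p.2 • v, p.1) := by fun_prop
    refine (hcont.tendsto' (u, 0) (u, u) (by simp)).mono_left ?_
    rw [nhds_prod_eq]
    exact prod_mono le_rfl nhdsWithin_le_nhds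
  have hpos : ∀ᶠ p : F × ℝ in 𝓝 u ×ˢ 𝓝[>] 0, 0 < p.2 :=
    tendsto_snd.eventually self_mem_nhdsWithin
  have hc : 0 < -J' v / (2 * ‖v‖) := by have := neg_pos.2 hv; positivity
  filter_upwards [htendsto.eventually (hJ.isLittleO.def hc), hpos] with ⟨x, r⟩ herr hr
  simp only [add_sub_cancel_left, map_smul, smul_eq_mul, norm_smul, Real.norm_eq_abs,
    abs_of_pos hr] at herr hr
  have hbound : -J' v / (2 * ‖v‖) * (r * ‖v‖) = r * (-J' v / 2) := by field_simp
  linarith [(le_abs_self _).trans herr, mul_neg_of_pos_of_neg hr hv]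

/-- The generalised Nehari (Nehari–Pankov) set of a functional `J` relative to a subspace `V`:
the points `u ∉ V` at which `J` is critical along `V ⊕ ℝ u`. -/
def nehariPankovSet (J : F → ℝ) (V : Submodule ℝ F) : Set F :=
  {u | u ∉ V ∧ ∀ w ∈ V ⊔ Submodule.span ℝ {u}, fderiv ℝ J u w = 0}

/-- The linear parametrisation `(e, t) ↦ e + t w` of `V ⊕ ℝ w`; on `t > 0` it parametrises the
fibre `V ⊕ ℝ⁺ w`, and `(0, 1)` corresponds to `w` itself. -/
noncomputable def fibreMap (V : Submodule ℝ F) (w : F) : V × ℝ →L[ℝ] F :=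
  V.subtypeL.coprod (ContinuousLinearMap.toSpanSingleton ℝ w)

variable {J : F → ℝ} {V : Submodule ℝ F} {u v : F}

theorem fibreMap_apply (V : Submodule ℝ F) (w : F) (p : V × ℝ) :
    fibreMap V w p = p.1 + p.2 • w := by
  simp [fibreMap]

theorem fibreMap_zero_one (V : Submodule ℝ F) (w : F) : fibreMap V w (0, 1) = w := by
  simp [fibreMap_apply]

theorem fibreMap_add_smul (V : Submodule ℝ F) (w v : F) (s : ℝ) (p : V × ℝ) :
    fibreMap V (w + s • v) p = fibreMap V w p + (s * p.2) • v := by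
  simp only [fibreMap_apply]
  module

theorem fibreMap_notMem {w : F} (hw : w ∉ V) {p : V × ℝ} (hp : p.2 ≠ 0) :
    fibreMap V w p ∉ V := by
  rw [fibreMap_apply, V.add_mem_iff_right p.1.2, V.smul_mem_iff hp]
  exact hw

theorem fibreMap_mem_nehariPankovSet {w : F} (hw : w ∉ V) {p : V × ℝ} (hp : p.2 ≠ 0)
    (hJ : DifferentiableAt ℝ J (fibreMap V w p))
    (hmax : IsLocalMax (fun q => J (fibreMap V w q)) p) :
    fibreMap V w p ∈ nehariPankovSet J V := by
  have hcrit : ∀ q, fderiv ℝ J (fibreMap V w p) (fibreMap V w q) = 0 :=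
    DFunLike.congr_fun <| hmax.hasFDerivAt_eq_zero <|
      hJ.hasFDerivAt.comp p (fibreMap V w).hasFDerivAt
  refine ⟨fibreMap_notMem hw hp, fun y hy => ?_⟩
  obtain ⟨e, he, z, hz, rfl⟩ := Submodule.mem_sup.1 hy
  obtain ⟨c, rfl⟩ := Submodule.mem_span_singleton.1 hz
  have hcrit_e : fderiv ℝ J (fibreMap V w p) e = 0 := by
    simpa [fibreMap_apply V w (_, 0)] using hcrit (⟨e, he⟩, 0)
  rw [map_add, map_smul, hcrit_e, hcrit p, smul_zero, add_zero]

theorem eventually_fibreMap_add_smul_lt (V : Submodule ℝ F) {J' : F →L[ℝ] ℝ}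
    (hJ : HasStrictFDerivAt J J' u) (hv : J' v < 0) :
    ∀ᶠ q : (V × ℝ) × ℝ in 𝓝 (0, 1) ×ˢ 𝓝[>] 0,
      J (fibreMap V (u + q.2 • v) q.1) < J (fibreMap V u q.1) := by
  have hbase : Tendsto (fun q : (V × ℝ) × ℝ => fibreMap V u q.1) (𝓝 (0, 1) ×ˢ 𝓝[>] 0) (𝓝 u) :=
    ((fibreMap V u).continuous.tendsto' (0, 1) u (fibreMap_zero_one V u)).comp tendsto_fst
  have hnhds : 𝓝 ((0, 1) : V × ℝ) ×ˢ 𝓝[>] (0 : ℝ) ≤ 𝓝 ((0, 1), 0) := by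
    rw [nhds_prod_eq (y := (0 : ℝ))]
    exact prod_mono le_rfl nhdsWithin_le_nhds
  have hstep_zero : Tendsto (fun q : (V × ℝ) × ℝ => q.2 * q.1.2) (𝓝 (0, 1) ×ˢ 𝓝[>] 0) (𝓝 0) := by
    have hcont : Continuous fun q : (V × ℝ) × ℝ => q.2 * q.1.2 := by fun_prop
    exact (hcont.tendsto' ((0, 1), 0) 0 (by simp)).mono_left hnhds
  have hstep_pos : ∀ᶠ q : (V × ℝ) × ℝ in 𝓝 (0, 1) ×ˢ 𝓝[>] 0, 0 < q.2 * q.1.2 := by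
    have ht : ∀ᶠ p : V × ℝ in 𝓝 (0, 1), 0 < p.2 :=
      (continuous_snd.tendsto ((0, 1) : V × ℝ)).eventually_const_lt one_pos
    filter_upwards [tendsto_fst.eventually ht,
      tendsto_snd.eventually (self_mem_nhdsWithin (s := Ioi 0))] with q ht hs
    exact mul_pos hs ht
  have hstep := tendsto_nhdsWithin_iff.2 ⟨hstep_zero, hstep_pos⟩
  filter_upwards [(hbase.prodMk hstep).eventually
    (eventually_add_smul_lt_of_hasStrictFDerivAt hJ hv)] with q hq
  rwa [fibreMap_add_smul]

theorem exists_mem_nehariPankovSet_lt [FiniteDimensional ℝ V] (hJ : ContDiff ℝ 1 J) (hu : u ∉ V)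
    (hmax : ∀ᶠ p in 𝓝[≠] ((0, 1) : V × ℝ), J (fibreMap V u p) < J u)
    (hv : fderiv ℝ J u v < 0) :
    ∃ w ∈ nehariPankovSet J V, J w < J u := by
  have hstrict : HasStrictFDerivAt J (fderiv ℝ J u) u :=
    hJ.contDiffAt.hasStrictFDerivAt one_ne_zero
  obtain ⟨P, hP, S, hS, hdescent⟩ :=
    eventually_prod_iff.1 (eventually_fibreMap_add_smul_lt V hstrict hv)
  have hnear : ∀ᶠ p : V × ℝ in 𝓝 (0, 1), J (fibreMap V u p) ≤ J u ∧ 0 < p.2 ∧ P p := by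
    refine Eventually.and ?_ <|
      ((continuous_snd.tendsto ((0, 1) : V × ℝ)).eventually_const_lt one_pos).and hP
    filter_upwards [eventually_nhdsWithin_iff.1 hmax] with p hp
    rcases eq_or_ne p (0, 1) with rfl | hne
    · rw [fibreMap_zero_one]
    · exact (hp hne).le
  have hlocal : ∀ᶠ s in 𝓝 (0 : ℝ), ∃ p : V × ℝ, (J (fibreMap V u p) ≤ J u ∧ 0 < p.2 ∧ P p) ∧
      IsLocalMax (fun p => J (fibreMap V (u + s • v) p)) p := by
    have hcont : Continuous fun q : ℝ × V × ℝ => J (fibreMap V (u + q.1 • v) q.2) := by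
      simp only [fibreMap_apply]
      have := hJ.continuous
      fun_prop
    refine eventually_exists_isLocalMax hcont ?_ hnear
    simpa [fibreMap_zero_one] using hmax
  have hnotMem : ∀ᶠ s in 𝓝 (0 : ℝ), u + s • v ∉ V := by
    have hcont : Continuous fun s : ℝ => u + s • v := by fun_prop
    exact hcont.continuousAt.eventually
      (V.closed_of_finiteDimensional.isOpen_compl.mem_nhds (by simpa using hu))
  obtain ⟨s, hs, ⟨p, ⟨hle, hp, hPp⟩, hlocmax⟩, hsV⟩ :=
    (hS.and (nhdsWithin_le_nhds (hlocal.and hnotMem))).exists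
  exact ⟨_, fibreMap_mem_nehariPankovSet hsV hp.ne' (hJ.differentiable one_ne_zero _) hlocmax,
    (hdescent hPp hs).trans_le hle⟩

theorem fderiv_eq_zero_of_isMinOn_nehariPankovSet [FiniteDimensional ℝ V] (hJ : ContDiff ℝ 1 J)
    (hu : u ∉ V) (hmax : ∀ᶠ p in 𝓝[≠] ((0, 1) : V × ℝ), J (fibreMap V u p) < J u)
    (hmin : IsMinOn J (nehariPankovSet J V) u) : fderiv ℝ J u = 0 := by
  have hnonneg : ∀ v, 0 ≤ fderiv ℝ J u v := fun v => by
    by_contra! hv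
    obtain ⟨w, hw, hlt⟩ := exists_mem_nehariPankovSet_lt hJ hu hmax hv
    exact hlt.not_ge (hmin hw)
  ext v
  exact le_antisymm (by simpa using hnonneg (-v)) (hnonneg v)

end NehariPankovSet

section ActionFunctional

theorem bilinForm_smul_add_self {K M : Type*} [Field K] [NeZero (2 : K)] [AddCommGroup M]
    [Module K M] {B : LinearMap.BilinForm K M} (hB : B.IsSymm) (s : K) (u e : M) :
    B ((1 + s) • u + e) ((1 + s) • u + e) =
      B u u + 2 * B u ((s * (s / 2 + 1)) • u + (1 + s) • e) + B e e := by
  have h2 : (2 : K) ≠ 0 := two_ne_zero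
  simp only [map_add, map_smul, LinearMap.add_apply, LinearMap.smul_apply, smul_eq_mul, hB.eq e u]
  field_simp
  ring

variable {F : Type*} [NormedAddCommGroup F] [NormedSpace ℝ F]

/-- The action functional `J(x) = ½ B(x, x) − I(x)` of a quadratic form with a nonlinear
perturbation; `J_λ` is the case where `B` is the polar form of `q_λ`. -/
noncomputable def actionFunctional (B : F →L[ℝ] F →L[ℝ] ℝ) (I : F → ℝ) (x : F) : ℝ :=
  B x x / 2 - I x

variable {B : F →L[ℝ] F →L[ℝ] ℝ} {I : F → ℝ} {V : Submodule ℝ F} {u : F}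

theorem hasFDerivAt_actionFunctional (hB : B.toBilinForm.IsSymm) {I' : F →L[ℝ] ℝ}
    (hI : HasFDerivAt I I' u) : HasFDerivAt (actionFunctional B I) (B u - I') u := by
  have hBself : HasFDerivAt (fun x => B x x) ((2 : ℝ) • B u) u :=
    (B.hasFDerivAt.clm_apply (hasFDerivAt_id u)).congr_fderiv <| by
      ext x
      have hsymm : B x u = B u x := hB.eq x u
      simp [hsymm, two_mul]
  refine ((hBself.mul_const (1 / 2 : ℝ)).sub hI).congr_fderiv ?_ |>.congr_of_eventuallyEq ?_
  · simp [smul_smul]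
  · exact .of_forall fun x => by simp [actionFunctional, div_eq_mul_inv]

theorem contDiff_actionFunctional {k : WithTop ℕ∞} (hI : ContDiff ℝ k I) :
    ContDiff ℝ k (actionFunctional B I) :=
  ((B.contDiff.clm_apply contDiff_id).div_const 2).sub hI

theorem actionFunctional_fibreMap_lt (hB : B.toBilinForm.IsSymm)
    (hneg : ∀ e ∈ V, e ≠ 0 → B e e < 0) {L : F →L[ℝ] ℝ}
    (hcrit : ∀ w ∈ V ⊔ Submodule.span ℝ {u}, B u w = L w)
    (hI4 : ∀ e ∈ V, ∀ s : ℝ, -1 ≤ s →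
      I u - I ((1 + s) • u + e) + L ((s * (s / 2 + 1)) • u + (1 + s) • e) ≤ 0)
    (hI4strict : ∀ s : ℝ, -1 ≤ s → s ≠ 0 →
      I u - I ((1 + s) • u) + L ((s * (s / 2 + 1)) • u) < 0)
    {p : V × ℝ} (hp : 0 ≤ p.2) (hne : p ≠ (0, 1)) :
    actionFunctional B I (fibreMap V u p) < actionFunctional B I u := by
  obtain ⟨⟨e, he⟩, t⟩ := p
  obtain ⟨s, rfl⟩ : ∃ s, t = 1 + s := ⟨t - 1, by ring⟩
  have hs : -1 ≤ s := by linarith [show 0 ≤ 1 + s from hp]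
  have hcrit_test : B u ((s * (s / 2 + 1)) • u + (1 + s) • e) =
      L ((s * (s / 2 + 1)) • u + (1 + s) • e) :=
    hcrit _ <| add_mem
      (Submodule.mem_sup_right <| Submodule.smul_mem _ _ <| Submodule.mem_span_singleton_self u)
      (Submodule.mem_sup_left <| V.smul_mem _ he)
  have hquad : B ((1 + s) • u + e) ((1 + s) • u + e) =
      B u u + 2 * B u ((s * (s / 2 + 1)) • u + (1 + s) • e) + B e e :=
    bilinForm_smul_add_self hB s u e
  rw [fibreMap_apply, add_comm, actionFunctional, actionFunctional, hquad, hcrit_test]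
  rcases eq_or_ne e 0 with rfl | he0
  · have hs0 : s ≠ 0 := by
      rintro rfl
      simp at hne
    have := hI4strict s hs hs0
    simp only [smul_zero, add_zero, map_zero]
    linarith
  · linarith [hI4 e he s hs, hneg e he he0]

theorem fderiv_actionFunctional_eq_zero_of_isMinOn [FiniteDimensional ℝ V]
    (hB : B.toBilinForm.IsSymm) (hneg : ∀ e ∈ V, e ≠ 0 → B e e < 0) (hI : ContDiff ℝ 1 I)
    (hI4 : ∀ e ∈ V, ∀ s : ℝ, -1 ≤ s →
      I u - I ((1 + s) • u + e) + fderiv ℝ I u ((s * (s / 2 + 1)) • u + (1 + s) • e) ≤ 0)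
    (hI4strict : ∀ s : ℝ, -1 ≤ s → s ≠ 0 →
      I u - I ((1 + s) • u) + fderiv ℝ I u ((s * (s / 2 + 1)) • u) < 0)
    (hu : u ∈ nehariPankovSet (actionFunctional B I) V)
    (hmin : IsMinOn (actionFunctional B I) (nehariPankovSet (actionFunctional B I) V) u) :
    fderiv ℝ (actionFunctional B I) u = 0 := by
  refine fderiv_eq_zero_of_isMinOn_nehariPankovSet (contDiff_actionFunctional hI) hu.1 ?_ hmin
  have hderiv : fderiv ℝ (actionFunctional B I) u = B u - fderiv ℝ I u :=
    (hasFDerivAt_actionFunctional hB (hI.differentiable one_ne_zero u).hasFDerivAt).fderiv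
  have hcrit : ∀ w ∈ V ⊔ Submodule.span ℝ {u}, B u w = fderiv ℝ I u w := fun w hw => by
    simpa [hderiv, sub_eq_zero] using hu.2 w hw
  have hnonneg : ∀ᶠ p in 𝓝[≠] ((0, 1) : V × ℝ), 0 ≤ p.2 :=
    nhdsWithin_le_nhds <| continuous_snd.continuousAt.eventually_const_le one_pos
  filter_upwards [hnonneg, self_mem_nhdsWithin] with p hp hne
  exact actionFunctional_fibreMap_lt hB hneg hcrit hI4 hI4strict hp hne

end ActionFunctional

section DiagonalForm

variable {ι H : Type*} [NormedAddCommGroup H] [InnerProductSpace ℝ H] {e : ι → H}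

theorem sum_abs_inner_mul_inner_le (he : Orthonormal ℝ e) (x y : H) (s : Finset ι) :
    ∑ k ∈ s, |⟪e k, x⟫_ℝ * ⟪e k, y⟫_ℝ| ≤ ‖x‖ * ‖y‖ := by
  have hbessel : ∀ z, √(∑ k ∈ s, |⟪e k, z⟫_ℝ| ^ 2) ≤ ‖z‖ := fun z =>
    (Real.sqrt_le_left (norm_nonneg z)).2 (he.sum_inner_products_le z)
  calc ∑ k ∈ s, |⟪e k, x⟫_ℝ * ⟪e k, y⟫_ℝ|
      = ∑ k ∈ s, |⟪e k, x⟫_ℝ| * |⟪e k, y⟫_ℝ| := by simp only [abs_mul]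
    _ ≤ √(∑ k ∈ s, |⟪e k, x⟫_ℝ| ^ 2) * √(∑ k ∈ s, |⟪e k, y⟫_ℝ| ^ 2) :=
        Real.sum_mul_le_sqrt_mul_sqrt s _ _
    _ ≤ ‖x‖ * ‖y‖ := mul_le_mul (hbessel x) (hbessel y) (Real.sqrt_nonneg _) (norm_nonneg x)

theorem summable_abs_inner_mul_inner (he : Orthonormal ℝ e) (x y : H) :
    Summable fun k => |⟪e k, x⟫_ℝ * ⟪e k, y⟫_ℝ| :=
  summable_of_sum_le (fun _ => abs_nonneg _) (sum_abs_inner_mul_inner_le he x y)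

theorem tsum_abs_inner_mul_inner_le (he : Orthonormal ℝ e) (x y : H) :
    ∑' k, |⟪e k, x⟫_ℝ * ⟪e k, y⟫_ℝ| ≤ ‖x‖ * ‖y‖ :=
  Real.tsum_le_of_sum_le (fun _ => abs_nonneg _) (sum_abs_inner_mul_inner_le he x y)

variable {μ : ι → ℝ} {C : ℝ}

theorem norm_mul_inner_mul_inner_le (hμ : ∀ k, |μ k| ≤ C) (x y : H) (k : ι) :
    ‖μ k * (⟪e k, x⟫_ℝ * ⟪e k, y⟫_ℝ)‖ ≤ C * |⟪e k, x⟫_ℝ * ⟪e k, y⟫_ℝ| := by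
  rw [Real.norm_eq_abs, abs_mul]
  exact mul_le_mul_of_nonneg_right (hμ k) (abs_nonneg _)

theorem summable_mul_inner_mul_inner (he : Orthonormal ℝ e) (hμ : ∀ k, |μ k| ≤ C) (x y : H) :
    Summable fun k => μ k * (⟪e k, x⟫_ℝ * ⟪e k, y⟫_ℝ) :=
  .of_norm_bounded ((summable_abs_inner_mul_inner he x y).mul_left C)
    (norm_mul_inner_mul_inner_le hμ x y)

theorem norm_tsum_mul_inner_mul_inner_le (he : Orthonormal ℝ e) (hC : 0 ≤ C)
    (hμ : ∀ k, |μ k| ≤ C) (x y : H) :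
    ‖∑' k, μ k * (⟪e k, x⟫_ℝ * ⟪e k, y⟫_ℝ)‖ ≤ C * ‖x‖ * ‖y‖ := by
  calc ‖∑' k, μ k * (⟪e k, x⟫_ℝ * ⟪e k, y⟫_ℝ)‖
      ≤ C * ∑' k, |⟪e k, x⟫_ℝ * ⟪e k, y⟫_ℝ| :=
        tsum_of_norm_bounded ((summable_abs_inner_mul_inner he x y).hasSum.mul_left C)
          (norm_mul_inner_mul_inner_le hμ x y)
    _ ≤ C * (‖x‖ * ‖y‖) := mul_le_mul_of_nonneg_left (tsum_abs_inner_mul_inner_le he x y) hC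
    _ = C * ‖x‖ * ‖y‖ := (mul_assoc _ _ _).symm

/-- The bounded bilinear form `(x, y) ↦ ∑ₖ μ_k ⟨e_k, x⟩⟨e_k, y⟩` that is diagonal, with bounded
symbol `μ`, in an orthonormal family `e`. -/
noncomputable def diagonalForm (he : Orthonormal ℝ e) (hμ : ∀ k, |μ k| ≤ C) :
    H →L[ℝ] H →L[ℝ] ℝ :=
  LinearMap.mkContinuous₂
    (LinearMap.mk₂ ℝ (fun x y => ∑' k, μ k * (⟪e k, x⟫_ℝ * ⟪e k, y⟫_ℝ))
      (fun x x' y => by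
        rw [← (summable_mul_inner_mul_inner he hμ x y).tsum_add
          (summable_mul_inner_mul_inner he hμ x' y)]
        exact tsum_congr fun k => by rw [inner_add_right]; ring)
      (fun a x y => by
        rw [smul_eq_mul, ← tsum_mul_left]
        exact tsum_congr fun k => by rw [real_inner_smul_right]; ring)
      (fun x y y' => by
        rw [← (summable_mul_inner_mul_inner he hμ x y).tsum_add
          (summable_mul_inner_mul_inner he hμ x y')]
        exact tsum_congr fun k => by rw [inner_add_right]; ring)
      (fun a x y => by
        rw [smul_eq_mul, ← tsum_mul_left]
        exact tsum_congr fun k => by rw [real_inner_smul_right]; ring))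
    |C| (norm_tsum_mul_inner_mul_inner_le he (abs_nonneg C) fun k =>
      (hμ k).trans (le_abs_self C))

theorem diagonalForm_apply (he : Orthonormal ℝ e) (hμ : ∀ k, |μ k| ≤ C) (x y : H) :
    diagonalForm he hμ x y = ∑' k, μ k * (⟪e k, x⟫_ℝ * ⟪e k, y⟫_ℝ) :=
  rfl

theorem isSymm_diagonalForm (he : Orthonormal ℝ e) (hμ : ∀ k, |μ k| ≤ C) :
    (diagonalForm he hμ).toBilinForm.IsSymm :=
  ⟨fun x y => tsum_congr fun k => by rw [mul_comm ⟪e k, x⟫_ℝ]⟩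

theorem inner_eq_zero_of_mem_span_image (he : Orthonormal ℝ e) {s : Set ι} {x : H}
    (hx : x ∈ Submodule.span ℝ (e '' s)) {k : ι} (hk : k ∉ s) : ⟪e k, x⟫_ℝ = 0 := by
  have hle : Submodule.span ℝ (e '' s) ≤ (Submodule.span ℝ {e k})ᗮ := by
    rw [Submodule.span_le]
    rintro _ ⟨j, hj, rfl⟩
    exact Submodule.mem_orthogonal_singleton_iff_inner_right.2
      (he.inner_eq_zero (ne_of_mem_of_not_mem hj hk).symm)
  exact Submodule.mem_orthogonal_singleton_iff_inner_right.1 (hle hx)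

theorem exists_inner_ne_zero_of_mem_span_image {s : Set ι} {x : H}
    (hx : x ∈ Submodule.span ℝ (e '' s)) (hx0 : x ≠ 0) : ∃ k ∈ s, ⟪e k, x⟫_ℝ ≠ 0 := by
  by_contra! h
  have hle : Submodule.span ℝ (e '' s) ≤ (Submodule.span ℝ {x})ᗮ := by
    rw [Submodule.span_le]
    rintro _ ⟨k, hk, rfl⟩
    exact Submodule.mem_orthogonal_singleton_iff_inner_left.2 (h k hk)
  exact hx0 (inner_self_eq_zero.1 (Submodule.mem_orthogonal_singleton_iff_inner_right.1 (hle hx)))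

theorem diagonalForm_self_neg (he : Orthonormal ℝ e) (hμ : ∀ k, |μ k| ≤ C) {s : Set ι}
    (hs : ∀ k ∈ s, μ k < 0) {x : H} (hx : x ∈ Submodule.span ℝ (e '' s)) (hx0 : x ≠ 0) :
    diagonalForm he hμ x x < 0 := by
  obtain ⟨k, hk, hkx⟩ := exists_inner_ne_zero_of_mem_span_image hx hx0
  have hterm_nonpos : ∀ j, μ j * (⟪e j, x⟫_ℝ * ⟪e j, x⟫_ℝ) ≤ 0 := fun j => by
    by_cases hj : j ∈ s
    · exact mul_nonpos_of_nonpos_of_nonneg (hs j hj).le (mul_self_nonneg _)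
    · simp [inner_eq_zero_of_mem_span_image he hx hj]
  have hterm_neg : μ k * (⟪e k, x⟫_ℝ * ⟪e k, x⟫_ℝ) < 0 :=
    mul_neg_of_neg_of_pos (hs k hk) (mul_self_pos.2 hkx)
  simpa [diagonalForm_apply] using Summable.tsum_lt_tsum hterm_nonpos hterm_neg
    (summable_mul_inner_mul_inner he hμ x x) summable_zero

theorem orthonormal_normalize {ζ : ι → H} (hζ0 : ∀ k, ζ k ≠ 0)
    (hζ : Pairwise fun j k => ⟪ζ j, ζ k⟫_ℝ = 0) :
    Orthonormal ℝ fun k => NormedSpace.normalize (ζ k) :=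
  ⟨fun k => NormedSpace.norm_normalize_eq_one_iff.2 (hζ0 k), fun j k hjk => by
    simp [NormedSpace.normalize, real_inner_smul_left, real_inner_smul_right, hζ hjk]⟩

end DiagonalForm

section Eigenfunctions

variable {H : Type*} [NormedAddCommGroup H] [InnerProductSpace ℝ H] {lam : ℕ → ℝ} {ζ : ℕ → H}
  {c : ℝ}

theorem orthonormal_normalize_eigenfunctions
    (hON : ∀ j k, ⟪ζ j, ζ k⟫_ℝ = if j = k then 1 + lam k else 0) (hpos : ∀ k, 0 < 1 + lam k) :
    Orthonormal ℝ fun k => NormedSpace.normalize (ζ k) := by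
  refine orthonormal_normalize (fun k hk => (hpos k).ne ?_) fun j k hjk => by simp [hON, hjk]
  simpa [hk] using hON k k

theorem abs_sub_div_one_add_le (hc : 0 < c) (hlam : ∀ k, c ≤ 1 + lam k) (lambda : ℝ) (k : ℕ) :
    |(lam k - lambda) / (1 + lam k)| ≤ 1 + |1 + lambda| / c := by
  have hpos : 0 < 1 + lam k := hc.trans_le (hlam k)
  calc |(lam k - lambda) / (1 + lam k)|
      = |1 - (1 + lambda) / (1 + lam k)| := by congr 1; field_simp; ring
    _ ≤ |1| + |(1 + lambda) / (1 + lam k)| := abs_sub _ _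
    _ = 1 + |1 + lambda| / (1 + lam k) := by rw [abs_one, abs_div, abs_of_pos hpos]
    _ ≤ 1 + |1 + lambda| / c := by gcongr; exact hlam k

/-- `q_λ` as a bounded bilinear form on `E`: in the `E`-orthonormal family `ζ_k / √(1 + λ_k)` it is
diagonal with symbol `(λ_k - λ) / (1 + λ_k)`. -/
noncomputable def qFormCLM (hON : ∀ j k, ⟪ζ j, ζ k⟫_ℝ = if j = k then 1 + lam k else 0)
    (hc : 0 < c) (hlam : ∀ k, c ≤ 1 + lam k) (lambda : ℝ) : H →L[ℝ] H →L[ℝ] ℝ :=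
  diagonalForm (orthonormal_normalize_eigenfunctions hON fun k => hc.trans_le (hlam k))
    (abs_sub_div_one_add_le hc hlam lambda)

theorem esub_le_span_normalize (ζ : ℕ → H) (n : ℕ) :
    Esub ζ n ≤ Submodule.span ℝ ((fun k => NormedSpace.normalize (ζ k)) '' {k | k ≤ n}) := by
  rw [Esub, Submodule.span_le]
  rintro _ ⟨k, hk, rfl⟩
  rw [SetLike.mem_coe, ← NormedSpace.norm_smul_normalize (ζ k)]
  exact Submodule.smul_mem _ _ (Submodule.subset_span (mem_image_of_mem _ hk))

variable (hON : ∀ j k, ⟪ζ j, ζ k⟫_ℝ = if j = k then 1 + lam k else 0)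
  (hc : 0 < c) (hlam : ∀ k, c ≤ 1 + lam k)
include hON hc hlam

theorem qFormCLM_apply (lambda : ℝ) (x y : H) :
    qFormCLM hON hc hlam lambda x y = qForm lam ζ lambda x y := by
  refine tsum_congr fun k => ?_
  have hnorm : ‖ζ k‖ ^ 2 = 1 + lam k := by simpa using hON k k
  simp only [NormedSpace.normalize, real_inner_smul_left, coefH, real_inner_comm (ζ k), ← hnorm]
  ring

theorem isSymm_qFormCLM (lambda : ℝ) : (qFormCLM hON hc hlam lambda).toBilinForm.IsSymm :=
  isSymm_diagonalForm _ _

theorem qFormCLM_self_neg {lambda : ℝ} {n : ℕ} (hlambda : ∀ k ≤ n, lam k < lambda) {e : H}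
    (he : e ∈ Esub ζ n) (he0 : e ≠ 0) : qFormCLM hON hc hlam lambda e e < 0 :=
  diagonalForm_self_neg _ _
    (fun k hk => div_neg_of_neg_of_pos (sub_neg.2 (hlambda k hk)) (hc.trans_le (hlam k)))
    (esub_le_span_normalize ζ n he) he0

theorem jfun_eq_actionFunctional (I : H → ℝ) (lambda : ℝ) :
    Jfun lam ζ I lambda = actionFunctional (qFormCLM hON hc hlam lambda) I := by
  ext x
  rw [Jfun, actionFunctional, qFormCLM_apply]

theorem jderiv_eq_fderiv_actionFunctional {I : H → ℝ} {I' : H → H →L[ℝ] ℝ} {u : H}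
    (hI : HasFDerivAt I (I' u) u) (lambda : ℝ) (w : H) :
    Jderiv lam ζ I' lambda u w =
      fderiv ℝ (actionFunctional (qFormCLM hON hc hlam lambda) I) u w := by
  rw [(hasFDerivAt_actionFunctional (isSymm_qFormCLM hON hc hlam lambda) hI).fderiv,
    sub_apply, qFormCLM_apply, Jderiv]

theorem nehariPankov_eq_nehariPankovSet {I : H → ℝ} {I' : H → H →L[ℝ] ℝ}
    (hI : ∀ x, HasFDerivAt I (I' x) x) (n : ℕ) (lambda : ℝ) :
    NehariPankov lam ζ I' n lambda =
      nehariPankovSet (actionFunctional (qFormCLM hON hc hlam lambda) I) (Esub ζ n) := by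
  ext x
  simp only [NehariPankov, nehariPankovSet, Fsub, mem_ofPred_eq,
    jderiv_eq_fderiv_actionFunctional hON hc hlam (hI x)]

end Eigenfunctions

theorem minimizer_is_critical_point_general {H : Type*} [NormedAddCommGroup H]
    [InnerProductSpace ℝ H] {lam : ℕ → ℝ} {ζ : ℕ → H}
    (hON : ∀ j k, ⟪ζ j, ζ k⟫_ℝ = if j = k then 1 + lam k else 0)
    {c : ℝ} (hc : 0 < c) (hlam : ∀ k, c ≤ 1 + lam k)
    {I : H → ℝ} {I' : H → H →L[ℝ] ℝ}
    (hIderiv : ∀ x, HasFDerivAt I (I' x) x) (hIderiv_cont : Continuous I')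
    {n : ℕ} {lambda : ℝ} (hlambda : ∀ k ≤ n, lam k < lambda) {u : H}
    (hI4 : ∀ e ∈ Esub ζ n, ∀ s : ℝ, -1 ≤ s →
      I u - I ((1 + s) • u + e) + I' u ((s * (s / 2 + 1)) • u + (1 + s) • e) ≤ 0)
    (hI4strict : ∀ s : ℝ, -1 ≤ s → s ≠ 0 →
      I u - I ((1 + s) • u) + I' u ((s * (s / 2 + 1)) • u) < 0)
    (hu : u ∈ NehariPankov lam ζ I' n lambda)
    (hmin : IsMinOn (Jfun lam ζ I lambda) (NehariPankov lam ζ I' n lambda) u) (v : H) :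
    Jderiv lam ζ I' lambda u v = 0 := by
  have : FiniteDimensional ℝ (Esub ζ n) :=
    FiniteDimensional.span_of_finite ℝ ((finite_le_nat n).image ζ)
  rw [nehariPankov_eq_nehariPankovSet hON hc hlam hIderiv] at hu hmin
  rw [jfun_eq_actionFunctional hON hc hlam] at hmin
  rw [← (hIderiv u).fderiv] at hI4 hI4strict
  rw [jderiv_eq_fderiv_actionFunctional hON hc hlam (hIderiv u),
    fderiv_actionFunctional_eq_zero_of_isMinOn (isSymm_qFormCLM hON hc hlam lambda)
      (fun _ => qFormCLM_self_neg hON hc hlam hlambda)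
      (contDiff_one_iff_hasFDerivAt.2 ⟨I', hIderiv_cont, hIderiv⟩) hI4 hI4strict hu hmin,
    zero_apply]

/-- Every minimizer of `J_λ` on the Nehari–Pankov set `NP_λ` is a
critical point of `J_λ`. -/
theorem minimizer_is_critical_point {E : Type*} [NormedAddCommGroup E]
    [InnerProductSpace ℝ E] [CompleteSpace E]
    (lam : ℕ → ℝ) (ζ : ℕ → E)
    (hlam_mono : Monotone lam) (hlam_nonneg : ∀ k, 0 ≤ lam k)
    (hlam_top : Tendsto lam atTop atTop)
    (hON : ∀ j k, ⟪ζ j, ζ k⟫_ℝ = if j = k then 1 + lam k else 0)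
    (hdense : (Submodule.span ℝ (Set.range ζ)).topologicalClosure = ⊤)
    (I : E → ℝ) (I' : E → E →L[ℝ] ℝ)
    (hIderiv : ∀ u, HasFDerivAt I (I' u) u) (hIderiv_cont : Continuous I')
    (hI1 : ∀ (u : ℕ → E) (a : E),
      (∀ φ : E →L[ℝ] ℝ, Tendsto (fun j => φ (u j)) atTop (𝓝 (φ a))) →
      Tendsto (fun j => I (u j)) atTop (𝓝 (I a)))
    (hI2 : I 0 = 0 ∧ ∀ u : E, u ≠ 0 → 0 < I u)
    (hI3mono : ∀ u : E, u ≠ 0 → MonotoneOn (fun t : ℝ => I (t • u) / t ^ 2) (Ioi 0))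
    (hI3zero : ∀ u : E, u ≠ 0 → Tendsto (fun t : ℝ => I (t • u) / t ^ 2) (𝓝[>] 0) (𝓝 0))
    (hI3top : ∀ u : E, u ≠ 0 → Tendsto (fun t : ℝ => I (t • u) / t ^ 2) atTop atTop)
    (hI4 : ∀ u : E, u ≠ 0 → ∀ v : E, ∀ s : ℝ, -1 ≤ s →
      I u - I ((1 + s) • u + v) + I' u ((s * (s / 2 + 1)) • u + (1 + s) • v) ≤ 0)
    (hI4strict : ∀ u : E, u ≠ 0 → ∀ s : ℝ, -1 ≤ s → s ≠ 0 →
      I u - I ((1 + s) • u) + I' u ((s * (s / 2 + 1)) • u) < 0)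
    (n : ℕ)
    (lambda : ℝ) (hlambda : lambda ∈ Ioo (lam n) (lam (n + 1)))
    (u : E) (hu : u ∈ NehariPankov lam ζ I' n lambda)
    (hmin : ∀ v ∈ NehariPankov lam ζ I' n lambda,
      Jfun lam ζ I lambda u ≤ Jfun lam ζ I lambda v) :
    ∀ v : E, Jderiv lam ζ I' lambda u v = 0 := by
  have hu0 : u ≠ 0 := fun h => hu.1 (h ▸ zero_mem _)
  exact minimizer_is_critical_point_general hON one_pos
    (fun k => le_add_of_nonneg_right (hlam_nonneg k)) hIderiv hIderiv_cont
    (fun k hk => (hlam_mono hk).trans_lt hlambda.1) (fun e _ => hI4 u hu0 e) (hI4strict u hu0)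
    hu hmin
end

section
/- Under assumptions (I1)–(I4), c_λ/(λ_{n+1} − λ) → 0 as λ → λ_{n+1} from the left; that is, for every δ > 0 there exists λ' ∈ (λ_n, λ_{n+1}) such that c_λ ≤ δ (λ_{n+1} − λ) for all λ ∈ (λ', λ_{n+1}). -/
open Filter Topology Set
open scoped InnerProductSpace

/- Abstract setting: `E = D(A^{1/2})` is a real Hilbert space in which the rescaled
eigenfunctions `ζ_k / √(1+λ_k)` form a Hilbert basis (encoded by `hON` and `hdense` below);
the `H`-inner product of `u, v ∈ E` is recovered as `∑ₖ ⟨u,ζ_k⟩_H ⟨v,ζ_k⟩_H`, where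
`⟨u,ζ_k⟩_H = ⟨u,ζ_k⟩_E / (1+λ_k)`. -/

variable {E : Type*} [NormedAddCommGroup E] [InnerProductSpace ℝ E] [CompleteSpace E]

/-!
On `E_{n+1}` the form `q_λ` with `λ_n ≤ λ` is at most `(λ_{n+1} - λ) ⟨u, ζ_{n+1}⟩_H²`. On a sphere
of fixed radius in this finite-dimensional space `I` is bounded below by some `m > 0`, so `J_λ` is
negative there once `λ_{n+1} - λ` is small, while `I (t ζ_{n+1}) = o(t²)` makes `J_λ` positive at
some point of the ball. Hence `J_λ` has a maximizer over the ball at which it is positive, and this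
maximizer is an interior point. Positivity keeps it out of `E_n`, and as `F_n(u) ⊆ E_{n+1}` for
`u ∈ E_{n+1}` it lies in the Nehari–Pankov set; its level is at most `λ_{n+1} - λ` times a constant
that depends only on the radius and is small with it.
-/

section Normed

variable {X : Type*} [NormedAddCommGroup X] [NormedSpace ℝ X]

lemma isCompact_submodule_inter_closedBall (V : Submodule ℝ X) [FiniteDimensional ℝ V] (r : ℝ) :
    IsCompact ((V : Set X) ∩ Metric.closedBall 0 r) := by
  have hcompact := (isCompact_closedBall (0 : V) r).image continuous_subtype_val
  rwa [← isometry_subtype_coe.preimage_closedBall, Subtype.image_preimage_coe] at hcompact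

lemma exists_pos_forall_le_of_norm_eq {V : Submodule ℝ X} [FiniteDimensional ℝ V] {f : X → ℝ}
    (hf : ContinuousOn f V) (hpos : ∀ x ∈ V, x ≠ 0 → 0 < f x) {r : ℝ} (hr : 0 < r) :
    ∃ m > 0, ∀ x ∈ V, ‖x‖ = r → m ≤ f x := by
  have hcompact := (isCompact_submodule_inter_closedBall V r).inter_right
    (Metric.isClosed_sphere (x := (0 : X)) (ε := r))
  obtain ⟨m, hm, hle⟩ := hcompact.exists_forall_le' (hf.mono fun x hx => hx.1.1) (a := 0)
    fun x hx => hpos x hx.1.1 (ne_zero_of_mem_sphere hr.ne' ⟨x, hx.2⟩)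
  exact ⟨m, hm, fun x hxV hxr => hle x ⟨⟨hxV, by simp [hxr]⟩, by simp [hxr]⟩⟩

lemma exists_isLocalMaxOn_of_lt_of_norm_eq {V : Submodule ℝ X} [FiniteDimensional ℝ V] {f : X → ℝ}
    (hf : ContinuousOn f V) {r : ℝ} {v : X} (hvV : v ∈ V) (hvr : ‖v‖ ≤ r)
    (hlt : ∀ x ∈ V, ‖x‖ = r → f x < f v) :
    ∃ u ∈ V, ‖u‖ < r ∧ f v ≤ f u ∧ IsLocalMaxOn f V u := by
  have hv : v ∈ (V : Set X) ∩ Metric.closedBall 0 r := ⟨hvV, by simpa using hvr⟩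
  obtain ⟨u, ⟨huV, hur⟩, hmax⟩ :=
    (isCompact_submodule_inter_closedBall V r).exists_isMaxOn_mem_subset
      (s := (V : Set X) ∩ Metric.ball 0 r) (hf.mono inter_subset_left) hv fun x hx =>
        hlt x hx.1.1 <| (mem_closedBall_zero_iff.1 hx.1.2).antisymm <| not_lt.1 fun h =>
          hx.2 ⟨hx.1.1, mem_ball_zero_iff.2 h⟩
  have hnhds : 𝓝[(V : Set X) ∩ Metric.closedBall 0 r] u = 𝓝[V] u :=
    nhdsWithin_inter_of_mem' <| mem_nhdsWithin_of_mem_nhds <|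
      Filter.mem_of_superset (Metric.isOpen_ball.mem_nhds hur) Metric.ball_subset_closedBall
  refine ⟨u, huV, mem_ball_zero_iff.1 hur, hmax hv, ?_⟩
  simpa only [IsLocalMaxOn, hnhds] using hmax.localize

lemma two_mul_le_fderiv_self_of_monotoneOn_div_sq {f : X → ℝ} {f' : X →L[ℝ] ℝ} {u : X}
    (hf : HasFDerivAt f f' u) (hmono : MonotoneOn (fun t : ℝ => f (t • u) / t ^ 2) (Ioi 0)) :
    2 * f u ≤ f' u := by
  have hray : HasDerivAt (fun t : ℝ => f (t • u)) (f' u) 1 := by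
    have hf_one : HasFDerivAt f f' ((1 : ℝ) • u) := by rwa [one_smul]
    exact (hf_one.comp_hasDerivAt 1 ((hasDerivAt_id (1 : ℝ)).smul_const u)).congr_deriv (by simp)
  have hquot : HasDerivAt (fun t : ℝ => f (t • u) / t ^ 2) (f' u - f u * 2) 1 :=
    (hray.div (hasDerivAt_pow 2 (1 : ℝ)) (by norm_num)).congr_deriv (by simp)
  have hnonneg := hmono.derivWithin_nonneg (x := 1)
  rw [derivWithin_of_isOpen isOpen_Ioi (mem_Ioi.2 one_pos), hquot.deriv] at hnonneg
  linarith

end Normed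

omit [CompleteSpace E]

variable {lam : ℕ → ℝ} {ζ : ℕ → E} {I : E → ℝ} {I' : E → E →L[ℝ] ℝ}
variable {lambda r : ℝ} {j k n : ℕ} {u w : E}

lemma coefH_add (u w : E) (k : ℕ) :
    coefH lam ζ (u + w) k = coefH lam ζ u k + coefH lam ζ w k := by
  simp only [coefH, inner_add_left, add_div]

lemma coefH_smul (s : ℝ) (u : E) (k : ℕ) : coefH lam ζ (s • u) k = s * coefH lam ζ u k := by
  simp only [coefH, real_inner_smul_left, mul_div_assoc]

lemma continuous_coefH (k : ℕ) : Continuous fun u => coefH lam ζ u k := by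
  unfold coefH
  fun_prop

instance finiteDimensional_esub (ζ : ℕ → E) (n : ℕ) : FiniteDimensional ℝ (Esub ζ n) :=
  FiniteDimensional.span_of_finite ℝ ((Set.finite_le_nat n).image ζ)

lemma eigenvector_mem_esub (hjn : j ≤ n) : ζ j ∈ Esub ζ n :=
  Submodule.subset_span (mem_image_of_mem ζ hjn)

lemma monotone_esub (ζ : ℕ → E) : Monotone (Esub ζ) := fun _ _ hmn =>
  Submodule.span_mono (image_mono fun _ hk => le_trans hk hmn)

lemma fsub_le_esub_succ (hu : u ∈ Esub ζ (n + 1)) : Fsub ζ n u ≤ Esub ζ (n + 1) :=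
  sup_le (monotone_esub ζ n.le_succ) ((Submodule.span_singleton_le_iff_mem u _).2 hu)

lemma jfun_nonneg_of_mem_nehariPankov (hu : u ∈ NehariPankov lam ζ I' n lambda)
    (hI : 2 * I u ≤ I' u u) : 0 ≤ Jfun lam ζ I lambda u := by
  have hself : u ∈ Fsub ζ n u := le_sup_right (a := Esub ζ n) (Submodule.mem_span_singleton_self u)
  have hcritical : qForm lam ζ lambda u u - I' u u = 0 := hu.2 u hself
  rw [Jfun]
  linarith

lemma clevel_le_jfun (hI : ∀ u ≠ 0, 2 * I u ≤ I' u u)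
    (hu : u ∈ NehariPankov lam ζ I' n lambda) :
    clevel lam ζ I I' n lambda ≤ Jfun lam ζ I lambda u := by
  refine csInf_le ⟨0, ?_⟩ (mem_image_of_mem _ hu)
  rintro _ ⟨v, hv, rfl⟩
  have hv_ne : v ≠ 0 := fun h => hv.1 (h ▸ zero_mem _)
  exact jfun_nonneg_of_mem_nehariPankov hv (hI v hv_ne)

section OrthogonalSystem

variable (hON : ∀ j k, ⟪ζ j, ζ k⟫_ℝ = if j = k then 1 + lam k else 0)

include hON

lemma coefH_eigenvector
    (hlam : -1 < lam j) (k : ℕ) : coefH lam ζ (ζ j) k = if j = k then 1 else 0 := by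
  rw [coefH, hON]
  split_ifs with hjk
  · exact div_self (by rw [← hjk]; linarith)
  · exact zero_div _

lemma sq_coefH_le (hlam : -1 < lam k) (u : E) : coefH lam ζ u k ^ 2 ≤ ‖u‖ ^ 2 / (1 + lam k) := by
  have hpos : 0 < 1 + lam k := by linarith
  have hCauchySchwarz : ⟪u, ζ k⟫_ℝ ^ 2 ≤ ‖u‖ ^ 2 * (1 + lam k) := by
    simpa only [hON, if_true, sq, real_inner_self_eq_norm_sq] using
      real_inner_mul_inner_self_le u (ζ k)
  rw [coefH, div_pow, div_le_div_iff₀ (by positivity) hpos]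
  nlinarith

lemma coefH_eq_zero_of_mem_esub (hu : u ∈ Esub ζ n) (hk : n < k) : coefH lam ζ u k = 0 := by
  induction hu using Submodule.span_induction with
  | mem x hx =>
    obtain ⟨j, hj, rfl⟩ := hx
    rw [coefH, hON, if_neg (hj.trans_lt hk).ne, zero_div]
  | zero => simp [coefH]
  | add x y _ _ hx hy => rw [coefH_add, hx, hy, add_zero]
  | smul a x _ hx => rw [coefH_smul, hx, mul_zero]

lemma qForm_eq_sum_of_mem_esub (hu : u ∈ Esub ζ n) (w : E) :
    qForm lam ζ lambda u w =
      ∑ k ∈ Finset.range (n + 1), (lam k - lambda) * (coefH lam ζ u k * coefH lam ζ w k) := by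
  refine tsum_eq_sum fun k hk => ?_
  rw [coefH_eq_zero_of_mem_esub hON hu (by simpa using hk), zero_mul, mul_zero]

lemma continuousOn_qForm_self : ContinuousOn (fun u => qForm lam ζ lambda u u) (Esub ζ n) := by
  have hsum : Continuous fun u => ∑ k ∈ Finset.range (n + 1),
      (lam k - lambda) * (coefH lam ζ u k * coefH lam ζ u k) :=
    continuous_finsetSum _ fun k _ =>
      ((continuous_coefH k).mul (continuous_coefH k)).const_mul _
  exact hsum.continuousOn.congr fun u hu => qForm_eq_sum_of_mem_esub hON hu u

lemma qForm_add_smul_self (hu : u ∈ Esub ζ n) (hw : w ∈ Esub ζ n) (s : ℝ) :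
    qForm lam ζ lambda (u + s • w) (u + s • w) =
      qForm lam ζ lambda u u + 2 * s * qForm lam ζ lambda u w +
        s ^ 2 * qForm lam ζ lambda w w := by
  have husw : u + s • w ∈ Esub ζ n := add_mem hu (Submodule.smul_mem _ s hw)
  simp only [qForm_eq_sum_of_mem_esub hON husw, qForm_eq_sum_of_mem_esub hON hu,
    qForm_eq_sum_of_mem_esub hON hw, coefH_add, coefH_smul, Finset.mul_sum,
    ← Finset.sum_add_distrib]
  exact Finset.sum_congr rfl fun k _ => by ring

lemma qForm_smul_eigenvector_self (hlam : -1 < lam j) (t : ℝ) :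
    qForm lam ζ lambda (t • ζ j) (t • ζ j) = (lam j - lambda) * t ^ 2 := by
  simp only [qForm, coefH_smul, coefH_eigenvector hON hlam]
  rw [tsum_eq_single j fun k hk => by simp [hk.symm]]
  simp only [if_true]
  ring

lemma qForm_self_le_mul_sq_coefH (hle : ∀ k ≤ n, lam k ≤ lambda) (hu : u ∈ Esub ζ (n + 1)) :
    qForm lam ζ lambda u u ≤ (lam (n + 1) - lambda) * coefH lam ζ u (n + 1) ^ 2 := by
  rw [qForm_eq_sum_of_mem_esub hON hu, Finset.sum_range_succ, sq]
  refine add_le_of_nonpos_left (Finset.sum_nonpos fun k hk => ?_)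
  have hk' : lam k ≤ lambda := hle k (Finset.mem_range_succ_iff.1 hk)
  exact mul_nonpos_of_nonpos_of_nonneg (by linarith) (mul_self_nonneg _)

lemma continuousOn_jfun
    (hI : ContinuousOn I (Esub ζ n)) : ContinuousOn (Jfun lam ζ I lambda) (Esub ζ n) :=
  ((continuousOn_qForm_self hON).div_const 2).sub hI

lemma hasLineDerivAt_jfun (hu : u ∈ Esub ζ n) (hw : w ∈ Esub ζ n) (hI : HasFDerivAt I (I' u) u) :
    HasLineDerivAt ℝ (Jfun lam ζ I lambda) (Jderiv lam ζ I' lambda u w) u w := by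
  have hq : HasDerivAt (fun s : ℝ => qForm lam ζ lambda (u + s • w) (u + s • w))
      (2 * qForm lam ζ lambda u w) 0 := by
    simp only [qForm_add_smul_self hON hu hw]
    exact (((((hasDerivAt_id (0 : ℝ)).const_mul 2).mul_const _).const_add _).add
      ((hasDerivAt_pow 2 (0 : ℝ)).mul_const (qForm lam ζ lambda w w))).congr_deriv (by simp)
  have hJ := (hq.div_const 2).sub (hI.hasLineDerivAt w)
  rwa [mul_div_cancel_left₀ _ two_ne_zero] at hJ

lemma jfun_le_of_mem_esub_succ
    (hlam : -1 < lam (n + 1)) (hle : ∀ k ≤ n, lam k ≤ lambda) (hlt : lambda ≤ lam (n + 1))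
    (hu : u ∈ Esub ζ (n + 1)) (hur : ‖u‖ ≤ r) :
    Jfun lam ζ I lambda u ≤ (lam (n + 1) - lambda) * (r ^ 2 / (2 * (1 + lam (n + 1)))) - I u := by
  have hpos : 0 < 1 + lam (n + 1) := by linarith
  have hq : qForm lam ζ lambda u u ≤ (lam (n + 1) - lambda) * (r ^ 2 / (1 + lam (n + 1))) :=
    calc qForm lam ζ lambda u u
      _ ≤ (lam (n + 1) - lambda) * coefH lam ζ u (n + 1) ^ 2 :=
        qForm_self_le_mul_sq_coefH hON hle hu
      _ ≤ (lam (n + 1) - lambda) * (‖u‖ ^ 2 / (1 + lam (n + 1))) :=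
        mul_le_mul_of_nonneg_left (sq_coefH_le hON hlam u) (sub_nonneg.2 hlt)
      _ ≤ (lam (n + 1) - lambda) * (r ^ 2 / (1 + lam (n + 1))) :=
        mul_le_mul_of_nonneg_left (by gcongr) (sub_nonneg.2 hlt)
  rw [Jfun, mul_comm 2, ← div_div, ← mul_div_assoc]
  linarith

lemma jfun_nonpos_of_mem_esub (hle : ∀ k ≤ n, lam k ≤ lambda) (hu : u ∈ Esub ζ n) (hI : 0 ≤ I u) :
    Jfun lam ζ I lambda u ≤ 0 := by
  have hq := qForm_self_le_mul_sq_coefH hON hle (monotone_esub ζ n.le_succ hu)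
  rw [coefH_eq_zero_of_mem_esub hON hu n.lt_succ_self, zero_pow two_ne_zero, mul_zero] at hq
  rw [Jfun]
  linarith

lemma exists_jfun_smul_eigenvector_pos (hlam : -1 < lam j) (hlt : lambda < lam j)
    (hI : Tendsto (fun t : ℝ => I (t • ζ j) / t ^ 2) (𝓝[>] 0) (𝓝 0)) (hr : 0 < r) :
    ∃ t : ℝ, ‖t • ζ j‖ ≤ r ∧ 0 < Jfun lam ζ I lambda (t • ζ j) := by
  have hsmall : ∀ᶠ t in 𝓝[>] (0 : ℝ), I (t • ζ j) / t ^ 2 < (lam j - lambda) / 2 :=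
    hI.eventually_lt_const (half_pos (sub_pos.2 hlt))
  have hnorm : ∀ᶠ t in 𝓝[>] (0 : ℝ), ‖t • ζ j‖ < r := by
    have hcont : Continuous fun t : ℝ => ‖t • ζ j‖ := by fun_prop
    exact nhdsWithin_le_nhds (hcont.continuousAt.eventually_lt_const (by simpa using hr))
  obtain ⟨t, htI, htr, ht : 0 < t⟩ := (hsmall.and (hnorm.and self_mem_nhdsWithin)).exists
  refine ⟨t, htr.le, ?_⟩
  rw [div_lt_iff₀ (by positivity)] at htI
  rw [Jfun, qForm_smul_eigenvector_self hON hlam]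
  linarith

lemma mem_nehariPankov_of_isLocalMaxOn
    (hI : HasFDerivAt I (I' u) u) (huE : u ∈ Esub ζ (n + 1)) (hu : u ∉ Esub ζ n)
    (hmax : IsLocalMaxOn (Jfun lam ζ I lambda) (Esub ζ (n + 1)) u) :
    u ∈ NehariPankov lam ζ I' n lambda := by
  refine ⟨hu, fun w hw => ?_⟩
  have hwE : w ∈ Esub ζ (n + 1) := fsub_le_esub_succ huE hw
  refine IsExtrFilter.hasLineDerivAt_eq_zero (.inr hmax) (hasLineDerivAt_jfun hON huE hwE hI) ?_
  have hline : Continuous fun s : ℝ => u + s • w := by fun_prop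
  exact tendsto_nhdsWithin_of_tendsto_nhds_of_eventually_within _ (hline.tendsto' 0 u (by simp))
    (.of_forall fun s => add_mem huE (Submodule.smul_mem _ s hwE))

lemma exists_mem_nehariPankov_jfun_le
    (hlam : -1 < lam (n + 1)) (hle : ∀ k ≤ n, lam k ≤ lambda) (hlt : lambda < lam (n + 1))
    (hIderiv : ∀ u, HasFDerivAt I (I' u) u) (hInonneg : ∀ u, 0 ≤ I u)
    (hIsmall : Tendsto (fun t : ℝ => I (t • ζ (n + 1)) / t ^ 2) (𝓝[>] 0) (𝓝 0)) (hr : 0 < r)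
    (hIsphere : ∀ u ∈ Esub ζ (n + 1), ‖u‖ = r →
      (lam (n + 1) - lambda) * (r ^ 2 / (2 * (1 + lam (n + 1)))) ≤ I u) :
    ∃ u ∈ NehariPankov lam ζ I' n lambda,
      Jfun lam ζ I lambda u ≤ (lam (n + 1) - lambda) * (r ^ 2 / (2 * (1 + lam (n + 1)))) := by
  have hJcont : ContinuousOn (Jfun lam ζ I lambda) (Esub ζ (n + 1)) :=
    continuousOn_jfun hON fun u _ => (hIderiv u).continuousAt.continuousWithinAt
  obtain ⟨t, htr, htpos⟩ := exists_jfun_smul_eigenvector_pos hON hlam hlt hIsmall hr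
  obtain ⟨u, huE, hur, htu, hmax⟩ := exists_isLocalMaxOn_of_lt_of_norm_eq hJcont
    (Submodule.smul_mem _ t (eigenvector_mem_esub le_rfl)) htr fun x hx hxr => by
      linarith [jfun_le_of_mem_esub_succ (I := I) hON hlam hle hlt.le hx hxr.le, hIsphere x hx hxr]
  have hu_notMem : u ∉ Esub ζ n := fun hu =>
    (htpos.trans_le htu).not_ge (jfun_nonpos_of_mem_esub hON hle hu (hInonneg u))
  refine ⟨u, mem_nehariPankov_of_isLocalMaxOn hON (hIderiv u) huE hu_notMem hmax, ?_⟩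
  linarith [jfun_le_of_mem_esub_succ (I := I) hON hlam hle hlt.le huE hur.le, hInonneg u]

end OrthogonalSystem

theorem clevel_flat_near_top_of_gap_general (hlam_mono : Monotone lam) (hlam : ∀ k, -1 < lam k)
    (hON : ∀ j k, ⟪ζ j, ζ k⟫_ℝ = if j = k then 1 + lam k else 0)
    (hIderiv : ∀ u, HasFDerivAt I (I' u) u) (hIzero : I 0 = 0) (hIpos : ∀ u ≠ 0, 0 < I u)
    (hIsuperquadratic : ∀ u ≠ 0, 2 * I u ≤ I' u u)
    (hIsmall : ∀ u ≠ 0, Tendsto (fun t : ℝ => I (t • u) / t ^ 2) (𝓝[>] 0) (𝓝 0))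
    (hgap : lam n < lam (n + 1)) :
    ∀ δ : ℝ, 0 < δ → ∃ lam' ∈ Ioo (lam n) (lam (n + 1)),
      ∀ lambda ∈ Ioo lam' (lam (n + 1)),
        clevel lam ζ I I' n lambda ≤ δ * (lam (n + 1) - lambda) := by
  intro δ hδ
  have hpos : 0 < 1 + lam (n + 1) := by linarith [hlam (n + 1)]
  obtain ⟨r, hr, hrδ⟩ : ∃ r > 0, r ^ 2 / (2 * (1 + lam (n + 1))) = δ :=
    ⟨√(δ * (2 * (1 + lam (n + 1)))), by positivity, by
      rw [Real.sq_sqrt (by positivity), mul_div_cancel_right₀ δ (by positivity)]⟩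
  obtain ⟨m, hm, hmI⟩ := exists_pos_forall_le_of_norm_eq (V := Esub ζ (n + 1))
    (fun u _ => (hIderiv u).continuousAt.continuousWithinAt) (fun u _ => hIpos u) hr
  obtain ⟨lam', hlam', hlam'_lt⟩ := exists_between (max_lt hgap (sub_lt_self _ (div_pos hm hδ)))
  obtain ⟨hn_lt, hm_lt⟩ := max_lt_iff.1 hlam'
  refine ⟨lam', ⟨hn_lt, hlam'_lt⟩, fun lambda hlambda => ?_⟩
  have hclose : (lam (n + 1) - lambda) * δ < m :=
    (lt_div_iff₀ hδ).1 (by linarith [hlambda.1])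
  have hζ : ζ (n + 1) ≠ 0 := fun h => hpos.ne (by simpa [h] using hON (n + 1) (n + 1))
  have hInonneg : ∀ u, 0 ≤ I u := fun u =>
    (eq_or_ne u 0).elim (fun h => by rw [h, hIzero]) fun h => (hIpos u h).le
  obtain ⟨u, hu, huJ⟩ := exists_mem_nehariPankov_jfun_le hON (hlam _)
    (fun k hk => (hlam_mono hk).trans (hn_lt.trans hlambda.1).le) hlambda.2 hIderiv hInonneg
    (hIsmall _ hζ) hr fun u hu hur => hrδ ▸ hclose.le.trans (hmI u hu hur)
  calc clevel lam ζ I I' n lambda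
    _ ≤ Jfun lam ζ I lambda u := clevel_le_jfun hIsuperquadratic hu
    _ ≤ δ * (lam (n + 1) - lambda) := by rwa [hrδ, mul_comm] at huJ

/-- `c_λ / (λ_{n+1} − λ) → 0` as `λ → λ_{n+1}⁻`: for every `δ > 0` there
is `λ' ∈ (λ_n, λ_{n+1})` with `c_λ ≤ δ (λ_{n+1} − λ)` for all `λ ∈ (λ', λ_{n+1})`. -/
theorem clevel_flat_near_top_of_gap {E : Type*} [NormedAddCommGroup E]
    [InnerProductSpace ℝ E] [CompleteSpace E]
    (lam : ℕ → ℝ) (ζ : ℕ → E)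
    (hlam_mono : Monotone lam) (hlam_nonneg : ∀ k, 0 ≤ lam k)
    (hlam_top : Tendsto lam atTop atTop)
    (hON : ∀ j k, ⟪ζ j, ζ k⟫_ℝ = if j = k then 1 + lam k else 0)
    (hdense : (Submodule.span ℝ (Set.range ζ)).topologicalClosure = ⊤)
    (I : E → ℝ) (I' : E → E →L[ℝ] ℝ)
    (hIderiv : ∀ u, HasFDerivAt I (I' u) u) (hIderiv_cont : Continuous I')
    (hI1 : ∀ (u : ℕ → E) (a : E),
      (∀ φ : E →L[ℝ] ℝ, Tendsto (fun j => φ (u j)) atTop (𝓝 (φ a))) →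
      Tendsto (fun j => I (u j)) atTop (𝓝 (I a)))
    (hI2 : I 0 = 0 ∧ ∀ u : E, u ≠ 0 → 0 < I u)
    (hI3mono : ∀ u : E, u ≠ 0 → MonotoneOn (fun t : ℝ => I (t • u) / t ^ 2) (Ioi 0))
    (hI3zero : ∀ u : E, u ≠ 0 → Tendsto (fun t : ℝ => I (t • u) / t ^ 2) (𝓝[>] 0) (𝓝 0))
    (hI3top : ∀ u : E, u ≠ 0 → Tendsto (fun t : ℝ => I (t • u) / t ^ 2) atTop atTop)
    (hI4 : ∀ u : E, u ≠ 0 → ∀ v : E, ∀ s : ℝ, -1 ≤ s →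
      I u - I ((1 + s) • u + v) + I' u ((s * (s / 2 + 1)) • u + (1 + s) • v) ≤ 0)
    (hI4strict : ∀ u : E, u ≠ 0 → ∀ s : ℝ, -1 ≤ s → s ≠ 0 →
      I u - I ((1 + s) • u) + I' u ((s * (s / 2 + 1)) • u) < 0)
    (n : ℕ)
    (hgap : lam n < lam (n + 1)) :
    ∀ δ : ℝ, 0 < δ → ∃ lam' ∈ Ioo (lam n) (lam (n + 1)),
      ∀ lambda ∈ Ioo lam' (lam (n + 1)),
        clevel lam ζ I I' n lambda ≤ δ * (lam (n + 1) - lambda) := by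
  exact clevel_flat_near_top_of_gap_general hlam_mono (fun k => by linarith [hlam_nonneg k]) hON
    hIderiv hI2.1 hI2.2 (fun u hu => two_mul_le_fderiv_self_of_monotoneOn_div_sq (hIderiv u)
      (hI3mono u hu)) hI3zero hgap
end
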